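/- (First unicity lemma for Needham–Schroeder–Lowe.) If evs ∈ nsl, Crypt (pubK B) ⟨Nonce NA, Agent A⟩ ∈ parts (spies evs), Crypt (pubK B') ⟨Nonce NA, Agent A'⟩ ∈ parts (spies evs) and Nonce NA ∉ analz (spies evs), then A = A' and B = B'. -/

import Mathlib

inductive agent : Type
  | Server : agent
  | Friend : ℕ → agent
  | Spy : agent
deriving DecidableEq

inductive msg : Type
  | Agent : agent → msg
  | Number : ℕ → msg
  | Nonce : ℕ → msg
  | Key : ℕ → msg
  | Hash : msg → msg
  | MPair : msg → msg → msg
  | Crypt : ℕ → msg → msg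
deriving DecidableEq

inductive partsP (H : Set msg) : msg → Prop
  | Inj : ∀ X, X ∈ H → partsP H X
  | Fst : ∀ X Y, partsP H (msg.MPair X Y) → partsP H X
  | Snd : ∀ X Y, partsP H (msg.MPair X Y) → partsP H Y
  | Body : ∀ K X, partsP H (msg.Crypt K X) → partsP H X

/-- `parts H`: sub-components of messages of `H`. -/
def parts (H : Set msg) : Set msg := {X | partsP H X}

inductive analzP (invKey : ℕ → ℕ) (H : Set msg) : msg → Prop
  | Inj : ∀ X, X ∈ H → analzP invKey H X
  | Fst : ∀ X Y, analzP invKey H (msg.MPair X Y) → analzP invKey H X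
  | Snd : ∀ X Y, analzP invKey H (msg.MPair X Y) → analzP invKey H Y
  | Decrypt : ∀ K X, analzP invKey H (msg.Crypt K X) →
      analzP invKey H (msg.Key (invKey K)) → analzP invKey H X

/-- `analz invKey H`: what can be obtained by decomposing and decrypting messages of `H`. -/
def analz (invKey : ℕ → ℕ) (H : Set msg) : Set msg := {X | analzP invKey H X}

inductive synthP (H : Set msg) : msg → Prop
  | Inj : ∀ X, X ∈ H → synthP H X
  | Ag : ∀ a, synthP H (msg.Agent a)
  | Num : ∀ n, synthP H (msg.Number n)
  | Hsh : ∀ X, synthP H X → synthP H (msg.Hash X)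
  | Pr : ∀ X Y, synthP H X → synthP H Y → synthP H (msg.MPair X Y)
  | Cry : ∀ K X, synthP H X → msg.Key K ∈ H → synthP H (msg.Crypt K X)

/-- `synth H`: messages that can be synthesized from `H`. -/
def synth (H : Set msg) : Set msg := {X | synthP H X}

inductive guardP (invKey : ℕ → ℕ) (n : ℕ) (Ks : Set ℕ) : msg → Prop
  | No_Nonce : ∀ X, msg.Nonce n ∉ parts {X} → guardP invKey n Ks X
  | Guard : ∀ K X, invKey K ∈ Ks → guardP invKey n Ks (msg.Crypt K X)
  | Cry : ∀ K X, guardP invKey n Ks X → guardP invKey n Ks (msg.Crypt K X)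
  | Pr : ∀ X Y, guardP invKey n Ks X → guardP invKey n Ks Y →
      guardP invKey n Ks (msg.MPair X Y)

/-- `guard n Ks`: messages in which `Nonce n` is guarded by the keys of `Ks`. -/
def guardMsg (invKey : ℕ → ℕ) (n : ℕ) (Ks : Set ℕ) : Set msg := {X | guardP invKey n Ks X}

/-- `Guard n Ks H`: every message of `H` lies in `guard n Ks`. -/
def Guard (invKey : ℕ → ℕ) (n : ℕ) (Ks : Set ℕ) (H : Set msg) : Prop :=
  ∀ X ∈ H, X ∈ guardMsg invKey n Ks
inductive event : Type
  | Says : agent → agent → msg → event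
deriving DecidableEq

def msgOf : event → msg
  | event.Says _ _ X => X

/-- Set of messages sent in a trace. -/
def sent (evs : List event) : Set msg :=
  {X | ∃ A B, event.Says A B X ∈ evs}
/-- Private key of an agent: the inverse of its public key. -/
def priK (invKey : ℕ → ℕ) (pubK : agent → ℕ) (A : agent) : ℕ := invKey (pubK A)

/-- Initial knowledge of each agent in a public-key infrastructure:
every agent knows its own private key and all public keys; the spy moreover
knows the private keys of the bad agents. -/
def initStatePK (invKey : ℕ → ℕ) (pubK : agent → ℕ) (bad : Set agent) : agent → Set msg :=
  fun A =>
    match A with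
    | agent.Spy =>
        {X | ∃ B ∈ bad, X = msg.Key (priK invKey pubK B)} ∪ {X | ∃ B, X = msg.Key (pubK B)}
    | _ => {msg.Key (priK invKey pubK A)} ∪ {X | ∃ B, X = msg.Key (pubK B)}

/-- `spies evs`: the private keys of the bad agents, all public keys, and
every message sent in `evs`. -/
def spiesPK (invKey : ℕ → ℕ) (pubK : agent → ℕ) (bad : Set agent) (evs : List event) :
    Set msg :=
  initStatePK invKey pubK bad agent.Spy ∪ sent evs

/-- `used evs`: parts of all agents' initial knowledge and of all messages sent in `evs`. -/
def usedPK (invKey : ℕ → ℕ) (pubK : agent → ℕ) (bad : Set agent) (evs : List event) :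
    Set msg :=
  parts ((⋃ A, initStatePK invKey pubK bad A) ∪ sent evs)
/-- The Needham–Schroeder–Lowe protocol. -/
inductive nsl (invKey : ℕ → ℕ) (pubK : agent → ℕ) (bad : Set agent) : List event → Prop
  | Nil : nsl invKey pubK bad []
  | Fake : ∀ evs B X, nsl invKey pubK bad evs →
      X ∈ synth (analz invKey (spiesPK invKey pubK bad evs)) →
      nsl invKey pubK bad (event.Says agent.Spy B X :: evs)
  | NS1 : ∀ evs A B NA, nsl invKey pubK bad evs →
      msg.Nonce NA ∉ usedPK invKey pubK bad evs →
      nsl invKey pubK bad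
        (event.Says A B (msg.Crypt (pubK B) (msg.MPair (msg.Nonce NA) (msg.Agent A))) :: evs)
  | NS2 : ∀ evs A A' B NA NB, nsl invKey pubK bad evs →
      msg.Nonce NB ∉ usedPK invKey pubK bad evs →
      event.Says A' B (msg.Crypt (pubK B) (msg.MPair (msg.Nonce NA) (msg.Agent A))) ∈ evs →
      nsl invKey pubK bad
        (event.Says B A (msg.Crypt (pubK A)
          (msg.MPair (msg.Nonce NA) (msg.MPair (msg.Nonce NB) (msg.Agent B)))) :: evs)
  | NS3 : ∀ evs A B B' NA NB, nsl invKey pubK bad evs →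
      event.Says A B (msg.Crypt (pubK B) (msg.MPair (msg.Nonce NA) (msg.Agent A))) ∈ evs →
      event.Says B' A (msg.Crypt (pubK A)
        (msg.MPair (msg.Nonce NA) (msg.MPair (msg.Nonce NB) (msg.Agent B)))) ∈ evs →
      nsl invKey pubK bad (event.Says A B (msg.Crypt (pubK B) (msg.Nonce NB)) :: evs)

/-!
By induction on the trace, as long as the spy does not know `NA`, all messages `⟨NA, A⟩` encrypted
under a key `K` that occur in the traffic have the same `A` and `K`. Such a message enters the
traffic in only two ways. Either an agent sends it in step NS1, and then `NA` is fresh, so no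
earlier message mentions it; or the spy sends a message containing it, and then, being unable to
build it without knowing `NA`, the spy must have found it in the earlier traffic. The messages of
steps NS2 and NS3 have another form.
-/

section Parts

variable {G H : Set msg}

theorem subset_parts : H ⊆ parts H := partsP.Inj

theorem parts_subset_parts (hGH : G ⊆ parts H) : parts G ⊆ parts H := by
  intro X hX
  induction hX with
  | Inj X hX => exact hGH hX
  | Fst X Y _ ih => exact partsP.Fst X Y ih
  | Snd X Y _ ih => exact partsP.Snd X Y ih
  | Body K X _ ih => exact partsP.Body K X ih

theorem parts_mono (hGH : G ⊆ H) : parts G ⊆ parts H :=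
  parts_subset_parts (hGH.trans subset_parts)

theorem parts_union : parts (G ∪ H) = parts G ∪ parts H := by
  apply Set.Subset.antisymm
  · intro X hX
    induction hX with
    | Inj X hX => exact hX.imp (partsP.Inj X) (partsP.Inj X)
    | Fst X Y _ ih => exact ih.imp (partsP.Fst X Y) (partsP.Fst X Y)
    | Snd X Y _ ih => exact ih.imp (partsP.Snd X Y) (partsP.Snd X Y)
    | Body K X _ ih => exact ih.imp (partsP.Body K X) (partsP.Body K X)
  · exact Set.union_subset (parts_mono Set.subset_union_left) (parts_mono Set.subset_union_right)

theorem parts_insert (X : msg) : parts (insert X H) = parts {X} ∪ parts H := by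
  rw [Set.insert_eq, parts_union]

theorem parts_eq_self (hpair : ∀ X Y, msg.MPair X Y ∉ H) (hcrypt : ∀ K X, msg.Crypt K X ∉ H) :
    parts H = H := by
  refine Set.Subset.antisymm (fun X hX ↦ ?_) subset_parts
  induction hX with
  | Inj _ hX => exact hX
  | Fst X Y _ ih => exact absurd ih (hpair X Y)
  | Snd X Y _ ih => exact absurd ih (hpair X Y)
  | Body K X _ ih => exact absurd ih (hcrypt K X)

theorem parts_singleton_agent (A : agent) : parts {msg.Agent A} = {msg.Agent A} :=
  parts_eq_self (by simp) (by simp)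

theorem parts_singleton_nonce (n : ℕ) : parts {msg.Nonce n} = {msg.Nonce n} :=
  parts_eq_self (by simp) (by simp)

theorem parts_singleton_mpair (X Y : msg) :
    parts {msg.MPair X Y} = insert (msg.MPair X Y) (parts {X} ∪ parts {Y}) := by
  have mem_parts : msg.MPair X Y ∈ parts {msg.MPair X Y} := subset_parts rfl
  apply Set.Subset.antisymm
  · intro Z hZ
    induction hZ with
    | Inj Z hZ => exact Or.inl hZ
    | Fst Z W _ ih =>
      rcases ih with hpair | hX | hY
      · cases hpair
        exact Or.inr (Or.inl (subset_parts rfl))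
      · exact Or.inr (Or.inl (partsP.Fst Z W hX))
      · exact Or.inr (Or.inr (partsP.Fst Z W hY))
    | Snd Z W _ ih =>
      rcases ih with hpair | hX | hY
      · cases hpair
        exact Or.inr (Or.inr (subset_parts rfl))
      · exact Or.inr (Or.inl (partsP.Snd Z W hX))
      · exact Or.inr (Or.inr (partsP.Snd Z W hY))
    | Body K Z _ ih =>
      rcases ih with hpair | hX | hY
      · cases hpair
      · exact Or.inr (Or.inl (partsP.Body K Z hX))
      · exact Or.inr (Or.inr (partsP.Body K Z hY))
  · refine Set.insert_subset mem_parts (Set.union_subset ?_ ?_)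
    · exact parts_subset_parts (Set.singleton_subset_iff.2 (partsP.Fst X Y mem_parts))
    · exact parts_subset_parts (Set.singleton_subset_iff.2 (partsP.Snd X Y mem_parts))

theorem parts_singleton_crypt (K : ℕ) (X : msg) :
    parts {msg.Crypt K X} = insert (msg.Crypt K X) (parts {X}) := by
  have mem_parts : msg.Crypt K X ∈ parts {msg.Crypt K X} := subset_parts rfl
  apply Set.Subset.antisymm
  · intro Z hZ
    induction hZ with
    | Inj Z hZ => exact Or.inl hZ
    | Fst Z W _ ih =>
      rcases ih with hcrypt | hX
      · cases hcrypt
      · exact Or.inr (partsP.Fst Z W hX)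
    | Snd Z W _ ih =>
      rcases ih with hcrypt | hX
      · cases hcrypt
      · exact Or.inr (partsP.Snd Z W hX)
    | Body K' Z _ ih =>
      rcases ih with hcrypt | hX
      · cases hcrypt
        exact Or.inr (subset_parts rfl)
      · exact Or.inr (partsP.Body K' Z hX)
  · exact Set.insert_subset mem_parts
      (parts_subset_parts (Set.singleton_subset_iff.2 (partsP.Body K X mem_parts)))

theorem crypt_nonce_agent_mem_parts_singleton_iff {K K' n n' : ℕ} {A A' : agent} :
    msg.Crypt K (msg.MPair (msg.Nonce n) (msg.Agent A)) ∈
        parts {msg.Crypt K' (msg.MPair (msg.Nonce n') (msg.Agent A'))} ↔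
      K = K' ∧ n = n' ∧ A = A' := by
  simp [parts_singleton_crypt, parts_singleton_mpair, parts_singleton_nonce, parts_singleton_agent]

theorem crypt_nonce_agent_notMem_parts_crypt_nonce_nonce_agent {K K' n n₁ n₂ : ℕ} {A A' : agent} :
    msg.Crypt K (msg.MPair (msg.Nonce n) (msg.Agent A)) ∉
      parts {msg.Crypt K'
        (msg.MPair (msg.Nonce n₁) (msg.MPair (msg.Nonce n₂) (msg.Agent A')))} := by
  simp [parts_singleton_crypt, parts_singleton_mpair, parts_singleton_nonce, parts_singleton_agent]

theorem crypt_mpair_notMem_parts_crypt_nonce {K K' n : ℕ} {X Y : msg} :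
    msg.Crypt K (msg.MPair X Y) ∉ parts {msg.Crypt K' (msg.Nonce n)} := by
  simp [parts_singleton_crypt, parts_singleton_nonce]

end Parts

section Analz

variable {invKey : ℕ → ℕ} {G H : Set msg}

theorem subset_analz : H ⊆ analz invKey H := analzP.Inj

theorem analz_mono (hGH : G ⊆ H) : analz invKey G ⊆ analz invKey H := by
  intro X hX
  induction hX with
  | Inj X hX => exact analzP.Inj X (hGH hX)
  | Fst X Y _ ih => exact analzP.Fst X Y ih
  | Snd X Y _ ih => exact analzP.Snd X Y ih
  | Decrypt K X _ _ ihCrypt ihKey => exact analzP.Decrypt K X ihCrypt ihKey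

theorem analz_subset_parts : analz invKey H ⊆ parts H := by
  intro X hX
  induction hX with
  | Inj X hX => exact partsP.Inj X hX
  | Fst X Y _ ih => exact partsP.Fst X Y ih
  | Snd X Y _ ih => exact partsP.Snd X Y ih
  | Decrypt K X _ _ ihCrypt _ => exact partsP.Body K X ihCrypt

end Analz

section Synth

variable {invKey : ℕ → ℕ} {H : Set msg}

theorem subset_synth : H ⊆ synth H := synthP.Inj

theorem mem_of_nonce_mem_synth {n : ℕ} (h : msg.Nonce n ∈ synth H) : msg.Nonce n ∈ H := by
  cases h with
  | Inj _ h => exact h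

theorem mem_or_mem_synth_of_mpair_mem_synth {X Y : msg} (h : msg.MPair X Y ∈ synth H) :
    msg.MPair X Y ∈ H ∨ X ∈ synth H ∧ Y ∈ synth H := by
  cases h with
  | Inj _ h => exact Or.inl h
  | Pr _ _ hX hY => exact Or.inr ⟨hX, hY⟩

theorem mem_or_mem_synth_of_crypt_mem_synth {K : ℕ} {X : msg} (h : msg.Crypt K X ∈ synth H) :
    msg.Crypt K X ∈ H ∨ X ∈ synth H := by
  cases h with
  | Inj _ h => exact Or.inl h
  | Cry _ _ hX _ => exact Or.inr hX

theorem parts_synth_subset : parts (synth H) ⊆ parts H ∪ synth H := by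
  intro X hX
  induction hX with
  | Inj X hX => exact Or.inr hX
  | Fst X Y _ ih =>
    rcases ih with hparts | hsynth
    · exact Or.inl (partsP.Fst X Y hparts)
    · exact (mem_or_mem_synth_of_mpair_mem_synth hsynth).imp
        (fun hH ↦ partsP.Fst X Y (subset_parts hH)) And.left
  | Snd X Y _ ih =>
    rcases ih with hparts | hsynth
    · exact Or.inl (partsP.Snd X Y hparts)
    · exact (mem_or_mem_synth_of_mpair_mem_synth hsynth).imp
        (fun hH ↦ partsP.Snd X Y (subset_parts hH)) And.right
  | Body K X _ ih =>
    rcases ih with hparts | hsynth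
    · exact Or.inl (partsP.Body K X hparts)
    · exact (mem_or_mem_synth_of_crypt_mem_synth hsynth).imp_left
        (fun hH ↦ partsP.Body K X (subset_parts hH))

theorem parts_insert_subset_of_mem_synth_analz {X : msg} (hX : X ∈ synth (analz invKey H)) :
    parts (insert X H) ⊆ parts H ∪ synth (analz invKey H) := by
  have hinsert : insert X H ⊆ synth (analz invKey H) :=
    Set.insert_subset hX (subset_analz.trans subset_synth)
  calc parts (insert X H)
    _ ⊆ parts (synth (analz invKey H)) := parts_mono hinsert
    _ ⊆ parts (analz invKey H) ∪ synth (analz invKey H) := parts_synth_subset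
    _ ⊆ parts H ∪ synth (analz invKey H) :=
      Set.union_subset_union_left _ (parts_subset_parts analz_subset_parts)

theorem mem_analz_of_crypt_mpair_nonce_mem_synth_analz {K n : ℕ} {Y : msg}
    (hn : msg.Nonce n ∉ analz invKey H)
    (h : msg.Crypt K (msg.MPair (msg.Nonce n) Y) ∈ synth (analz invKey H)) :
    msg.Crypt K (msg.MPair (msg.Nonce n) Y) ∈ analz invKey H := by
  refine (mem_or_mem_synth_of_crypt_mem_synth h).resolve_right fun hbody ↦ hn ?_
  rcases mem_or_mem_synth_of_mpair_mem_synth hbody with hpair | ⟨hnonce, _⟩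
  · exact analzP.Fst _ _ hpair
  · exact mem_of_nonce_mem_synth hnonce

theorem crypt_mpair_nonce_mem_parts_of_mem_parts_insert {K n : ℕ} {X Y : msg}
    (hX : X ∈ synth (analz invKey H)) (hn : msg.Nonce n ∉ analz invKey H)
    (h : msg.Crypt K (msg.MPair (msg.Nonce n) Y) ∈ parts (insert X H)) :
    msg.Crypt K (msg.MPair (msg.Nonce n) Y) ∈ parts H :=
  (parts_insert_subset_of_mem_synth_analz hX h).elim id fun hsynth ↦
    analz_subset_parts (mem_analz_of_crypt_mpair_nonce_mem_synth_analz hn hsynth)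

end Synth

section Traces

variable {invKey : ℕ → ℕ} {pubK : agent → ℕ} {bad : Set agent} {evs : List event}

theorem sent_nil : sent [] = ∅ := by
  simp [sent]

theorem sent_cons (A B : agent) (X : msg) :
    sent (event.Says A B X :: evs) = insert X (sent evs) := by
  ext Y
  simp [sent, exists_or]

theorem spiesPK_cons (A B : agent) (X : msg) :
    spiesPK invKey pubK bad (event.Says A B X :: evs) = insert X (spiesPK invKey pubK bad evs) := by
  rw [spiesPK, sent_cons, Set.union_insert, spiesPK]

theorem exists_eq_key_of_mem_initStatePK_spy {X : msg}
    (hX : X ∈ initStatePK invKey pubK bad agent.Spy) : ∃ K, X = msg.Key K := by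
  rcases hX with ⟨B, _, hX⟩ | ⟨B, hX⟩
  · exact ⟨_, hX⟩
  · exact ⟨_, hX⟩

theorem exists_eq_key_of_mem_parts_spiesPK_nil {X : msg}
    (hX : X ∈ parts (spiesPK invKey pubK bad [])) : ∃ K, X = msg.Key K := by
  rw [spiesPK, sent_nil, Set.union_empty, parts_eq_self] at hX
  · exact exists_eq_key_of_mem_initStatePK_spy hX
  · intro X Y h
    simpa using exists_eq_key_of_mem_initStatePK_spy h
  · intro K X h
    simpa using exists_eq_key_of_mem_initStatePK_spy h

theorem parts_spiesPK_subset_usedPK :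
    parts (spiesPK invKey pubK bad evs) ⊆ usedPK invKey pubK bad evs :=
  parts_mono <| Set.union_subset_union_left _ <|
    Set.subset_iUnion (initStatePK invKey pubK bad) agent.Spy

theorem crypt_mpair_nonce_notMem_parts_spiesPK {K n : ℕ} {Y : msg}
    (hn : msg.Nonce n ∉ usedPK invKey pubK bad evs) :
    msg.Crypt K (msg.MPair (msg.Nonce n) Y) ∉ parts (spiesPK invKey pubK bad evs) :=
  fun h ↦ hn (parts_spiesPK_subset_usedPK (partsP.Fst _ _ (partsP.Body _ _ h)))

theorem notMem_analz_spiesPK_of_cons {e : event} {X : msg}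
    (hX : X ∉ analz invKey (spiesPK invKey pubK bad (e :: evs))) :
    X ∉ analz invKey (spiesPK invKey pubK bad evs) := by
  obtain ⟨A, B, Y⟩ := e
  rw [spiesPK_cons] at hX
  exact fun h ↦ hX (analz_mono (Set.subset_insert _ _) h)

end Traces

theorem nsl_unicity1_general {invKey : ℕ → ℕ} {pubK : agent → ℕ} {bad : Set agent}
    {evs : List event} {A A' : agent} {K K' NA : ℕ} (hevs : nsl invKey pubK bad evs)
    (h : msg.Crypt K (msg.MPair (msg.Nonce NA) (msg.Agent A)) ∈ parts (spiesPK invKey pubK bad evs))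
    (h' : msg.Crypt K' (msg.MPair (msg.Nonce NA) (msg.Agent A')) ∈
      parts (spiesPK invKey pubK bad evs))
    (hNA : msg.Nonce NA ∉ analz invKey (spiesPK invKey pubK bad evs)) :
    A = A' ∧ K = K' := by
  induction hevs with
  | Nil => simpa using exists_eq_key_of_mem_parts_spiesPK_nil h
  | Fake _ _ _ _ hX ih =>
    have hNA := notMem_analz_spiesPK_of_cons hNA
    rw [spiesPK_cons] at h h'
    exact ih (crypt_mpair_nonce_mem_parts_of_mem_parts_insert hX hNA h)
      (crypt_mpair_nonce_mem_parts_of_mem_parts_insert hX hNA h') hNA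
  | NS1 _ _ _ _ _ hfresh ih =>
    rw [spiesPK_cons, parts_insert, Set.mem_union, crypt_nonce_agent_mem_parts_singleton_iff]
      at h h'
    rcases h with ⟨rfl, rfl, rfl⟩ | hold
    · obtain ⟨rfl, -, rfl⟩ := h'.resolve_right (crypt_mpair_nonce_notMem_parts_spiesPK hfresh)
      exact ⟨rfl, rfl⟩
    · rcases h' with ⟨-, rfl, -⟩ | hold'
      · exact absurd hold (crypt_mpair_nonce_notMem_parts_spiesPK hfresh)
      · exact ih hold hold' (notMem_analz_spiesPK_of_cons hNA)
  | NS2 _ _ _ _ _ _ _ _ _ ih =>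
    rw [spiesPK_cons, parts_insert] at h h'
    exact ih (h.resolve_left crypt_nonce_agent_notMem_parts_crypt_nonce_nonce_agent)
      (h'.resolve_left crypt_nonce_agent_notMem_parts_crypt_nonce_nonce_agent)
      (notMem_analz_spiesPK_of_cons hNA)
  | NS3 _ _ _ _ _ _ _ _ _ ih =>
    rw [spiesPK_cons, parts_insert] at h h'
    exact ih (h.resolve_left crypt_mpair_notMem_parts_crypt_nonce)
      (h'.resolve_left crypt_mpair_notMem_parts_crypt_nonce)
      (notMem_analz_spiesPK_of_cons hNA)

/-- First unicity lemma for Needham–Schroeder–Lowe. -/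
theorem nsl_unicity1
    (invKey : ℕ → ℕ) (pubK : agent → ℕ) (bad : Set agent)
    (hinv : ∀ K, invKey (invKey K) = K)
    (hpub : Function.Injective pubK)
    (hpri : Function.Injective (priK invKey pubK))
    (hpubpri : ∀ A B : agent, pubK A ≠ priK invKey pubK B)
    (hspy : agent.Spy ∈ bad)
    (evs : List event) (A A' B B' : agent) (NA : ℕ)
    (hevs : nsl invKey pubK bad evs)
    (h1 : msg.Crypt (pubK B) (msg.MPair (msg.Nonce NA) (msg.Agent A))
      ∈ parts (spiesPK invKey pubK bad evs))
    (h2 : msg.Crypt (pubK B') (msg.MPair (msg.Nonce NA) (msg.Agent A'))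
      ∈ parts (spiesPK invKey pubK bad evs))
    (h3 : msg.Nonce NA ∉ analz invKey (spiesPK invKey pubK bad evs)) :
    A = A' ∧ B = B' := by
  have ⟨hA, hK⟩ := nsl_unicity1_general hevs h1 h2 h3
  exact ⟨hA, hpub hK⟩
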